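/- Let Ω ⊂ ℍ ≅ ℂ² be a bounded domain, θ ∈ [0,2π), α, β ∈ ℂ. Then the (α,β)-holomorphic Bergman space ${}_{α,β}A(Ω)$ possesses a reproducing kernel: there is a function ${}_{α,β}B_Ω : Ω × Ω → ℂ$ such that for each z ∈ Ω the function $w ↦ \overline{{}_{α,β}B_Ω(z,w)}$ belongs to ${}_{α,β}A(Ω)$ and $f(z) = ∫_Ω {}_{α,β}B_Ω(z,w)\,f(w)\,dμ_w$ for every f ∈ ${}_{α,β}A(Ω)$. -/

import Mathlib

open MeasureTheory

noncomputable section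

/-- The real quaternions `ℍ`. -/
abbrev H4 : Type := Quaternion ℝ

instance : MeasurableSpace H4 := borel _
instance : BorelSpace H4 := ⟨rfl⟩

/-- The quaternion unit `i`. -/
def qI : H4 := ⟨0, 1, 0, 0⟩
/-- The quaternion unit `j`. -/
def qJ : H4 := ⟨0, 0, 1, 0⟩
/-- `e^{iθ} = cos θ + (sin θ) i` as a quaternion. -/
def eIθ (θ : ℝ) : H4 := ⟨Real.cos θ, Real.sin θ, 0, 0⟩
/-- The basis direction `i e^{iθ} j`. -/
def e2 (θ : ℝ) : H4 := qI * eIθ θ * qJ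
/-- The basis direction `e^{iθ} j`. -/
def e3 (θ : ℝ) : H4 := eIθ θ * qJ

/-- Third θ-coordinate of a quaternion `z = x₀ + x₁ i + x₂ (i e^{iθ} j) + x₃ (e^{iθ} j)`. -/
def x2θ (θ : ℝ) (z : H4) : ℝ := -z.imJ * Real.sin θ + z.imK * Real.cos θ
/-- Fourth θ-coordinate of a quaternion. -/
def x3θ (θ : ℝ) (z : H4) : ℝ := z.imJ * Real.cos θ + z.imK * Real.sin θ

/-- The θ-inner product `⟨u,z⟩_θ`: the dot product of θ-coordinates. -/
def innerθ (θ : ℝ) (u z : H4) : ℝ :=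
  u.re * z.re + u.imI * z.imI + x2θ θ u * x2θ θ z + x3θ θ u * x3θ θ z

/-- Left θ-Cauchy–Riemann operator
`{}^θ𝒟 f = ∂f/∂x₀ + i ∂f/∂x₁ + (i e^{iθ} j) ∂f/∂x₂ + (e^{iθ} j) ∂f/∂x₃`. -/
def Dl (θ : ℝ) (f : H4 → H4) (z : H4) : H4 :=
  fderiv ℝ f z 1 + qI * fderiv ℝ f z qI + e2 θ * fderiv ℝ f z (e2 θ) +
    e3 θ * fderiv ℝ f z (e3 θ)

/-- Left (θ,u)-Cauchy–Riemann operator `{}^θ_u𝒟 f = {}^θ𝒟 f + u f`. -/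
def Dlu (θ : ℝ) (u : H4) (f : H4 → H4) (z : H4) : H4 := Dl θ f z + u * f z

/-- Right θ-Cauchy–Riemann operator. -/
def Dr (θ : ℝ) (f : H4 → H4) (z : H4) : H4 :=
  fderiv ℝ f z 1 + fderiv ℝ f z qI * qI + fderiv ℝ f z (e2 θ) * e2 θ +
    fderiv ℝ f z (e3 θ) * e3 θ

/-- Right (θ,u)-Cauchy–Riemann operator `{}^θ𝒟_{r,u} f = {}^θ𝒟_r f + f u`. -/
def Dru (θ : ℝ) (u : H4) (f : H4 → H4) (z : H4) : H4 := Dr θ f z + f z * u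

/-- Embedding of ℂ into the quaternions, `ℂ ≅ ℝ + ℝi ⊂ ℍ`. -/
def toH (a : ℂ) : H4 := ⟨a.re, a.im, 0, 0⟩

/-- First complex θ-component of a quaternion: `z₁ = x₀ + x₁ i`. -/
def c1 (z : H4) : ℂ := ⟨z.re, z.imI⟩
/-- Second complex θ-component of a quaternion: `z₂ = x₂ + x₃ i`. -/
def c2 (θ : ℝ) (z : H4) : ℂ := ⟨x2θ θ z, x3θ θ z⟩

/-- Wirtinger operator `∂/∂z̄₁ = ∂/∂x₀ + i ∂/∂x₁` on ℂ-valued functions. -/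
def db1 (f : H4 → ℂ) (z : H4) : ℂ := fderiv ℝ f z 1 + Complex.I * fderiv ℝ f z qI
/-- Wirtinger operator `∂/∂z̄₂ = ∂/∂x₂ + i ∂/∂x₃` on ℂ-valued functions. -/
def db2 (θ : ℝ) (f : H4 → ℂ) (z : H4) : ℂ :=
  fderiv ℝ f z (e2 θ) + Complex.I * fderiv ℝ f z (e3 θ)
/-- Wirtinger operator `∂/∂z₂ = ∂/∂x₂ − i ∂/∂x₃` on ℂ-valued functions. -/
def dz2 (θ : ℝ) (f : H4 → ℂ) (z : H4) : ℂ :=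
  fderiv ℝ f z (e2 θ) - Complex.I * fderiv ℝ f z (e3 θ)

/-- `e^{iθ}` as a complex number. -/
def cexpI (θ : ℝ) : ℂ := ⟨Real.cos θ, Real.sin θ⟩

/-- The (α,β)-holomorphic Bergman space `{}_{α,β}A(Ω)`: C¹ solutions of
`∂f/∂z̄₁ = −αf`, `∂f/∂z̄₂ = −βf` with `∫_Ω |f|² dμ < ∞`. -/
def memAc (θ : ℝ) (α β : ℂ) (Ω : Set H4) (f : H4 → ℂ) : Prop :=
  ContDiffOn ℝ 1 f Ω ∧ (∀ z ∈ Ω, db1 f z = -α * f z ∧ db2 θ f z = -β * f z) ∧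
    IntegrableOn (fun z => ‖f z‖ ^ 2) Ω volume

/-! ### Helper lemmas -/

lemma toH_re (a : ℂ) : (toH a).re = a.re := rfl
lemma toH_imI (a : ℂ) : (toH a).imI = a.im := rfl
lemma toH_imJ (a : ℂ) : (toH a).imJ = 0 := rfl
lemma toH_imK (a : ℂ) : (toH a).imK = 0 := rfl
lemma one_re' : (1 : H4).re = 1 := rfl
lemma one_imI' : (1 : H4).imI = 0 := rfl
lemma one_imJ' : (1 : H4).imJ = 0 := rfl
lemma one_imK' : (1 : H4).imK = 0 := rfl
lemma qI_re : qI.re = 0 := rfl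
lemma qI_imI : qI.imI = 1 := rfl
lemma qI_imJ : qI.imJ = 0 := rfl
lemma qI_imK : qI.imK = 0 := rfl

/-- The real-linear map `s ↦ w s`, for `s ∈ ℂ`. -/
def ln (w : H4) : ℂ →L[ℝ] H4 :=
  Complex.reCLM.smulRight w + Complex.imCLM.smulRight (w * qI)

lemma ln_apply (w : H4) (s : ℂ) : ln w s = s.re • w + s.im • (w * qI) := by
  simp [ln]

lemma ln_eq (w : H4) (s : ℂ) : ln w s = w * toH s := by
  rw [ln_apply]
  ext <;> simp [toH_re, toH_imI, toH_imJ, toH_imK, qI_re, qI_imI, qI_imJ, qI_imK] <;> ring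

lemma norm_toH (s : ℂ) : ‖toH s‖ = ‖s‖ := by
  have h : ‖toH s‖ ^ 2 = ‖s‖ ^ 2 := by
    rw [← Complex.normSq_eq_norm_sq, sq, ← Quaternion.normSq_eq_norm_mul_self,
      Quaternion.normSq_def']
    simp [toH, Complex.normSq_apply]; ring
  exact (sq_eq_sq₀ (norm_nonneg _) (norm_nonneg _)).1 h

lemma norm_ln (w : H4) (s : ℂ) : ‖ln w s‖ = ‖w‖ * ‖s‖ := by
  rw [ln_eq, norm_mul, norm_toH]

/-- Weighted holomorphy. -/
def WHol (ψ : H4 →L[ℝ] ℂ) (Ω : Set H4) (f : H4 → ℂ) : Prop :=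
  ContDiffOn ℝ 1 f Ω ∧ ∀ z ∈ Ω, ∀ v, fderiv ℝ f z (v * qI)
    = Complex.I * fderiv ℝ f z v + 2 * Complex.I * f z * ψ v

lemma psi_ln {ψ : H4 →L[ℝ] ℂ} (hψ : ∀ v, ψ (v * qI) = -Complex.I * ψ v) (w : H4) (s : ℂ) :
    ψ (ln w s) = (s.re - Complex.I * s.im) * ψ w := by
  rw [ln_apply, map_add, map_smul, map_smul, hψ]
  simp only [Complex.real_smul]; ring

lemma line_hasDerivAt {ψ : H4 →L[ℝ] ℂ} (hψ : ∀ v, ψ (v * qI) = -Complex.I * ψ v)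
    {Ω : Set H4} (hΩ : IsOpen Ω) {f : H4 → ℂ} (hf : WHol ψ Ω f) (z w : H4) (s : ℂ)
    (hs : z + ln w s ∈ Ω) :
    HasDerivAt (fun s : ℂ => Complex.exp (ψ (ln w s)) * f (z + ln w s))
      (Complex.exp (ψ (ln w s)) * (fderiv ℝ f (z + ln w s) w + f (z + ln w s) * ψ w)) s := by
  have hd : HasFDerivAt f (fderiv ℝ f (z + ln w s)) (z + ln w s) :=
    ((hf.1.contDiffAt (hΩ.mem_nhds hs)).differentiableAt (by simp)).hasFDerivAt
  have h1 : HasFDerivAt (fun s : ℂ => z + ln w s) (ln w) s := (ln w).hasFDerivAt.const_add z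
  have h2 : HasFDerivAt (fun s : ℂ => f (z + ln w s)) ((fderiv ℝ f (z + ln w s)).comp (ln w)) s :=
    hd.comp s h1
  have h3 : HasFDerivAt (fun s : ℂ => ψ (ln w s)) (ψ.comp (ln w)) s := (ψ.comp (ln w)).hasFDerivAt
  have h4 := h3.cexp.mul h2
  rw [hasDerivAt_iff_hasFDerivAt]
  refine hasFDerivAt_of_restrictScalars ℝ h4 ?_
  ext v
  have e1 : fderiv ℝ f (z + ln w s) (ln w v) = v.re * fderiv ℝ f (z + ln w s) w
      + v.im * (Complex.I * fderiv ℝ f (z + ln w s) w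
        + 2 * Complex.I * f (z + ln w s) * ψ w) := by
    rw [ln_apply w v, map_add, map_smul, map_smul, hf.2 _ hs]
    simp only [Complex.real_smul]
  have e2 := psi_ln hψ w v
  have e3 := Complex.re_add_im v
  simp only [ContinuousLinearMap.coe_restrictScalars', ContinuousLinearMap.toSpanSingleton_apply,
    add_apply, smul_apply, ContinuousLinearMap.comp_apply,
    smul_eq_mul, e1, e2]
  generalize fderiv ℝ f (z + ln w s) w = D
  generalize f (z + ln w s) = F
  generalize Complex.exp _ = X
  linear_combination (-(X * (D + F * ψ w))) * e3

lemma ball_line {z w : H4} {r : ℝ} {Ω : Set H4} (hb : Metric.closedBall z r ⊆ Ω) (hw : ‖w‖ ≤ r)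
    {s : ℂ} (hs : s ∈ Metric.closedBall (0 : ℂ) 1) : z + ln w s ∈ Metric.closedBall z r := by
  simp only [Metric.mem_closedBall, dist_zero_right, dist_self_add_left] at *
  rw [norm_ln]
  nlinarith [norm_nonneg w, norm_nonneg s]

lemma line_diffContOnCl {ψ : H4 →L[ℝ] ℂ} (hψ : ∀ v, ψ (v * qI) = -Complex.I * ψ v)
    {Ω : Set H4} (hΩ : IsOpen Ω) {f : H4 → ℂ} (hf : WHol ψ Ω f) {z w : H4} {r : ℝ}
    (hb : Metric.closedBall z r ⊆ Ω) (hw : ‖w‖ ≤ r) :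
    DiffContOnCl ℂ (fun s : ℂ => Complex.exp (ψ (ln w s)) * f (z + ln w s))
      (Metric.ball 0 1) := by
  refine DifferentiableOn.diffContOnCl (fun s hs => ?_)
  rw [closure_ball _ one_ne_zero] at hs
  exact (line_hasDerivAt hψ hΩ hf z w s
    (hb (ball_line hb hw hs))).differentiableAt.differentiableWithinAt

lemma norm_exp_le (ψ : H4 →L[ℝ] ℂ) {w : H4} {r : ℝ} (hw : ‖w‖ ≤ r) {s : ℂ}
    (hs : s ∈ Metric.closedBall (0 : ℂ) 1) :
    ‖Complex.exp (ψ (ln w s))‖ ≤ Real.exp (‖ψ‖ * r) := by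
  rw [Complex.norm_exp]
  apply Real.exp_le_exp.2
  refine (Complex.re_le_norm _).trans ((ψ.le_opNorm _).trans ?_)
  gcongr
  rw [norm_ln]
  simp at hs
  nlinarith [norm_nonneg w, norm_nonneg s]

/-- derivative estimate -/
lemma fderiv_bound {ψ : H4 →L[ℝ] ℂ} (hψ : ∀ v, ψ (v * qI) = -Complex.I * ψ v)
    {Ω : Set H4} (hΩ : IsOpen Ω) {f : H4 → ℂ} (hf : WHol ψ Ω f) {z : H4} {r : ℝ} (hr : 0 < r)
    (hb : Metric.closedBall z r ⊆ Ω) {M : ℝ} (hM : ∀ x ∈ Metric.closedBall z r, ‖f x‖ ≤ M) :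
    ‖fderiv ℝ f z‖ ≤ (Real.exp (‖ψ‖ * r) / r + ‖ψ‖) * M := by
  have hM0 : 0 ≤ M := (norm_nonneg _).trans (hM z (by simp [hr.le]))
  have key : ∀ w : H4, ‖w‖ = r → ‖fderiv ℝ f z w‖ ≤ (Real.exp (‖ψ‖ * r) / r + ‖ψ‖) * M * ‖w‖ := by
    intro w hw
    have h1 := Complex.norm_deriv_le_of_forall_mem_sphere_norm_le one_pos
      (line_diffContOnCl hψ hΩ hf hb hw.le) (C := Real.exp (‖ψ‖ * r) * M) (by
        intro s hs
        have hs' := Metric.sphere_subset_closedBall hs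
        rw [norm_mul]
        exact mul_le_mul (norm_exp_le ψ hw.le hs') (hM _ (ball_line hb hw.le hs'))
          (norm_nonneg _) (Real.exp_pos _).le)
    rw [(line_hasDerivAt hψ hΩ hf z w 0 (by
      simpa using hb (Metric.mem_closedBall_self hr.le))).deriv] at h1
    simp only [map_zero, Complex.exp_zero, add_zero, one_mul, div_one] at h1
    have h2 : ‖f z * ψ w‖ ≤ M * (‖ψ‖ * r) := by
      rw [norm_mul]
      exact mul_le_mul (hM z (by simp [hr.le])) (hw ▸ ψ.le_opNorm w) (norm_nonneg _) hM0
    have h3 : ‖fderiv ℝ f z w‖ ≤ ‖fderiv ℝ f z w + f z * ψ w‖ + ‖f z * ψ w‖ := by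
      simpa using norm_sub_le (fderiv ℝ f z w + f z * ψ w) (f z * ψ w)
    rw [hw]
    have : (Real.exp (‖ψ‖ * r) / r + ‖ψ‖) * M * r = Real.exp (‖ψ‖ * r) * M + M * (‖ψ‖ * r) := by
      field_simp
    linarith
  refine ContinuousLinearMap.opNorm_le_bound _ (by positivity) (fun w => ?_)
  by_cases hw : w = 0
  · simp [hw]
  have hw' : 0 < ‖w‖ := norm_pos_iff.2 hw
  have := key ((r / ‖w‖) • w) (by rw [norm_smul]; simp [abs_of_pos hr]; field_simp)
  rw [map_smul, norm_smul, norm_smul] at this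
  have h0 : 0 < ‖r / ‖w‖‖ := norm_pos_iff.2 (div_pos hr hw').ne'
  refine le_of_mul_le_mul_left ?_ h0
  linarith

/-- right multiplication by a unit complex number -/
lemma mp_rot (t : ℝ) : MeasurePreserving (fun w : H4 => ln w (circleMap 0 1 t)) volume volume := by
  let u : ℂ := circleMap 0 1 t
  have hu : ‖u‖ = 1 := by simp [u]
  have hinv : toH u * toH (starRingEnd ℂ u) = 1 := by
    have : u.re * u.re + u.im * u.im = 1 := by
      rw [← Complex.normSq_apply, Complex.normSq_eq_norm_sq, hu]; norm_num
    ext <;> simp [toH_re, toH_imI, toH_imJ, toH_imK,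
      one_re', one_imI', one_imJ', one_imK'] <;> linarith
  have hinv' : toH (starRingEnd ℂ u) * toH u = 1 := by
    have : u.re * u.re + u.im * u.im = 1 := by
      rw [← Complex.normSq_apply, Complex.normSq_eq_norm_sq, hu]; norm_num
    ext <;> simp [toH_re, toH_imI, toH_imJ, toH_imK,
      one_re', one_imI', one_imJ', one_imK'] <;> linarith
  let e : H4 ≃ₗᵢ[ℝ] H4 :=
    { toLinearEquiv := LinearEquiv.ofLinearMap (LinearMap.mulRight ℝ (toH u))
        (LinearMap.mulRight ℝ (toH (starRingEnd ℂ u)))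
        (by ext1 x; simp [mul_assoc, hinv']) (by ext1 x; simp [mul_assoc, hinv])
      norm_map' := fun x => by
        change ‖x * toH u‖ = ‖x‖
        rw [norm_mul, norm_toH, hu, mul_one] }
  have := e.measurePreserving
  have h2 : (e : H4 → H4) = fun w : H4 => ln w (circleMap 0 1 t) := by
    funext w; rw [ln_eq]; rfl
  rwa [h2] at this

open scoped ENNReal in
lemma circle_bound {h : ℂ → ℂ} (hh : DiffContOnCl ℂ h (Metric.ball 0 1)) :
    ENNReal.ofReal (2 * Real.pi) * ‖h 0‖ₑ ^ 2
      ≤ ∫⁻ t in Set.Ioc 0 (2 * Real.pi), ‖h (circleMap 0 1 t)‖ₑ ^ 2 := by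
  have h2 : DiffContOnCl ℂ (fun s => h s * h s) (Metric.ball 0 |1|) := by
    rw [abs_one]
    exact ⟨hh.1.mul hh.1, hh.2.mul hh.2⟩
  have h3 := h2.circleAverage
  rw [Real.circleAverage_def, intervalIntegral.integral_of_le (by positivity)] at h3
  have h4 : (2 * Real.pi : ℝ) • (h 0 * h 0)
      = ∫ t in Set.Ioc 0 (2 * Real.pi), h (circleMap 0 1 t) * h (circleMap 0 1 t) := by
    rw [← h3, smul_inv_smul₀ (by positivity)]
  have h5 := enorm_integral_le_lintegral_enorm (μ := volume.restrict (Set.Ioc 0 (2 * Real.pi)))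
    (fun t => h (circleMap 0 1 t) * h (circleMap 0 1 t))
  rw [← h4, enorm_smul, Real.enorm_eq_ofReal (by positivity)] at h5
  simpa [enorm_mul, sq] using h5

open scoped ENNReal in
lemma lintegral_rot {G : H4 → ℝ≥0∞} (hG : Measurable G) (z : H4) (t : ℝ) :
    ∫⁻ w : H4, G (z + ln w (circleMap 0 1 t)) = ∫⁻ x, G x := by
  have hGz : Measurable (fun w => G (z + w)) := hG.comp (measurable_const_add z)
  have h1 : ∫⁻ w : H4, G (z + ln w (circleMap 0 1 t)) = ∫⁻ w : H4, G (z + w) :=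
    (mp_rot t).lintegral_comp hGz
  have h2 : ∫⁻ w : H4, G (z + w) = ∫⁻ w : H4, G w :=
    lintegral_add_left_eq_self G z
  exact h1.trans h2


lemma cont_rot (z : H4) : Continuous (fun p : H4 × ℝ => z + ln p.1 (circleMap 0 1 p.2)) := by
  simp only [ln_apply]
  fun_prop

lemma cont_rot' (z : H4) (t : ℝ) : Continuous (fun w : H4 => z + ln w (circleMap 0 1 t)) := by
  simp only [ln_apply]
  fun_prop

open scoped ENNReal in
lemma swap_rot {G : H4 → ℝ≥0∞} (hG : Measurable G) (z : H4) (K : ℝ≥0∞) :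
    ∫⁻ w : H4, ∫⁻ t in Set.Ioc 0 (2 * Real.pi), K * G (z + ln w (circleMap 0 1 t))
      = ENNReal.ofReal (2 * Real.pi) * (K * ∫⁻ x, G x) := by
  have hm : Measurable (fun p : H4 × ℝ => K * G (z + ln p.1 (circleMap 0 1 p.2))) :=
    (hG.comp (cont_rot z).measurable).const_mul K
  have h1 := lintegral_lintegral_swap (μ := (volume : Measure H4))
            (ν := volume.restrict (Set.Ioc 0 (2 * Real.pi)))
            (f := fun w t => K * G (z + ln w (circleMap 0 1 t))) hm.aemeasurable
  rw [h1]
  have h2 : ∀ t, ∫⁻ w : H4, K * G (z + ln w (circleMap 0 1 t)) = K * ∫⁻ x, G x := by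
    intro t
    have hm2 : Measurable (fun w : H4 => G (z + ln w (circleMap 0 1 t))) :=
      hG.comp (cont_rot' z t).measurable
    rw [lintegral_const_mul K hm2, lintegral_rot hG z t]
  simp only [h2]
  rw [setLIntegral_const, Real.volume_Ioc, sub_zero, mul_comm]

open scoped ENNReal in
lemma l2_bound {ψ : H4 →L[ℝ] ℂ} (hψ : ∀ v, ψ (v * qI) = -Complex.I * ψ v)
    {Ω : Set H4} (hΩ : IsOpen Ω) {f : H4 → ℂ} (hf : WHol ψ Ω f) {z : H4} {r : ℝ}
    (hb : Metric.closedBall z r ⊆ Ω) :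
    volume (Metric.ball (0 : H4) r) * ‖f z‖ₑ ^ 2
      ≤ ENNReal.ofReal (Real.exp (‖ψ‖ * r)) ^ 2 * ∫⁻ x in Ω, ‖f x‖ₑ ^ 2 := by
  set K := ENNReal.ofReal (Real.exp (‖ψ‖ * r)) ^ 2 with hK
  set P := ENNReal.ofReal (2 * Real.pi) with hP
  have hP0 : P ≠ 0 := by simp [hP, Real.pi_pos]
  have hPt : P ≠ ∞ := ENNReal.ofReal_ne_top
  let G : H4 → ℝ≥0∞ := Ω.indicator (fun x => ‖f x‖ₑ ^ 2)
  have hG : Measurable G := by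
    have h1 : Measurable (Ω.indicator f) := by
      classical
      have h2 := hf.1.continuousOn.measurable_piecewise
        (g := fun _ => (0 : ℂ)) continuousOn_const hΩ.measurableSet
      have h3 := Set.piecewise_eq_indicator (s := Ω) (f := f)
      rw [← h3]
      exact h2
    have h3 : G = fun x => ‖Ω.indicator f x‖ₑ ^ 2 := by
      funext x
      by_cases hx : x ∈ Ω <;> simp [G, hx]
    rw [h3]
    exact h1.enorm.pow_const 2
  have hGI : ∫⁻ x, G x = ∫⁻ x in Ω, ‖f x‖ₑ ^ 2 := lintegral_indicator hΩ.measurableSet _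
  have step1 : ∀ w ∈ Metric.ball (0 : H4) r, P * ‖f z‖ₑ ^ 2
      ≤ ∫⁻ t in Set.Ioc 0 (2 * Real.pi), K * G (z + ln w (circleMap 0 1 t)) := by
    intro w hw
    have hw' : ‖w‖ ≤ r := by simpa using (Metric.mem_ball.1 hw).le
    have h1 := circle_bound (line_diffContOnCl hψ hΩ hf hb hw')
    simp only [map_zero, Complex.exp_zero, add_zero, one_mul] at h1
    refine h1.trans (lintegral_mono (fun t => ?_))
    have ht : circleMap 0 1 t ∈ Metric.closedBall (0 : ℂ) 1 := by simp
    have hm := hb (ball_line hb hw' ht)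
    have : G (z + ln w (circleMap 0 1 t)) = ‖f (z + ln w (circleMap 0 1 t))‖ₑ ^ 2 := by
      simp [G, hm]
    simp only [this, enorm_mul, mul_pow]
    refine mul_le_mul_left (pow_le_pow_left' ?_ 2) _
    rw [← ofReal_norm]
    exact ENNReal.ofReal_le_ofReal (norm_exp_le ψ hw' ht)
  have step2 : P * (volume (Metric.ball (0 : H4) r) * ‖f z‖ₑ ^ 2)
      ≤ P * (K * ∫⁻ x in Ω, ‖f x‖ₑ ^ 2) := by
    calc P * (volume (Metric.ball (0 : H4) r) * ‖f z‖ₑ ^ 2)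
        = ∫⁻ w in Metric.ball (0 : H4) r, P * ‖f z‖ₑ ^ 2 := by
          rw [setLIntegral_const]; ring
      _ ≤ ∫⁻ w in Metric.ball (0 : H4) r,
            ∫⁻ t in Set.Ioc 0 (2 * Real.pi), K * G (z + ln w (circleMap 0 1 t)) :=
          setLIntegral_mono' Metric.isOpen_ball.measurableSet step1
      _ ≤ ∫⁻ w : H4,
            ∫⁻ t in Set.Ioc 0 (2 * Real.pi), K * G (z + ln w (circleMap 0 1 t)) :=
          setLIntegral_le_lintegral _ _
      _ = P * (K * ∫⁻ x in Ω, ‖f x‖ₑ ^ 2) := by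
          rw [swap_rot hG z K, hGI]
  exact (ENNReal.mul_le_mul_iff_right hP0 hPt).1 step2

/-- The exponent. -/
def psi (θ : ℝ) (α β : ℂ) : H4 →L[ℝ] ℂ := LinearMap.toContinuousLinearMap
  { toFun := fun v => (α * (v.re - Complex.I * v.imI)
      + β * (x2θ θ v - Complex.I * x3θ θ v)) / 2
    map_add' := by
      intro x y; simp [x2θ, x3θ]; ring
    map_smul' := by
      intro c x; simp [x2θ, x3θ]; ring }

lemma psi_apply (θ : ℝ) (α β : ℂ) (v : H4) : psi θ α β v
    = (α * (v.re - Complex.I * v.imI) + β * (x2θ θ v - Complex.I * x3θ θ v)) / 2 := rfl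

lemma psi_qI (θ : ℝ) (α β : ℂ) (v : H4) :
    psi θ α β (v * qI) = -Complex.I * psi θ α β v := by
  simp only [psi_apply, x2θ, x3θ, Quaternion.re_mul, Quaternion.imI_mul, Quaternion.imJ_mul,
    Quaternion.imK_mul, qI_re, qI_imI, qI_imJ, qI_imK]
  push_cast [-Complex.ofReal_cos, -Complex.ofReal_sin]
  have := Complex.I_sq
  linear_combination (-(α * v.imI + β * (v.imJ * Real.cos θ + v.imK * Real.sin θ)) / 2 : ℂ) * this

lemma qJ_re : qJ.re = 0 := rfl
lemma qJ_imI : qJ.imI = 0 := rfl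
lemma qJ_imJ : qJ.imJ = 1 := rfl
lemma qJ_imK : qJ.imK = 0 := rfl
lemma eI_re (θ : ℝ) : (eIθ θ).re = Real.cos θ := rfl
lemma eI_imI (θ : ℝ) : (eIθ θ).imI = Real.sin θ := rfl
lemma eI_imJ (θ : ℝ) : (eIθ θ).imJ = 0 := rfl
lemma eI_imK (θ : ℝ) : (eIθ θ).imK = 0 := rfl
lemma e2_re (θ : ℝ) : (e2 θ).re = 0 := by
  simp [e2, qI_re, qI_imI, qI_imJ, qI_imK, qJ_re, qJ_imI, qJ_imJ, qJ_imK,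
    eI_re, eI_imI, eI_imJ, eI_imK]
lemma e2_imI (θ : ℝ) : (e2 θ).imI = 0 := by
  simp [e2, qI_re, qI_imI, qI_imJ, qI_imK, qJ_re, qJ_imI, qJ_imJ, qJ_imK,
    eI_re, eI_imI, eI_imJ, eI_imK]
lemma e2_imJ (θ : ℝ) : (e2 θ).imJ = -Real.sin θ := by
  simp [e2, qI_re, qI_imI, qI_imJ, qI_imK, qJ_re, qJ_imI, qJ_imJ, qJ_imK,
    eI_re, eI_imI, eI_imJ, eI_imK]
lemma e2_imK (θ : ℝ) : (e2 θ).imK = Real.cos θ := by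
  simp [e2, qI_re, qI_imI, qI_imJ, qI_imK, qJ_re, qJ_imI, qJ_imJ, qJ_imK,
    eI_re, eI_imI, eI_imJ, eI_imK]
lemma e3_re (θ : ℝ) : (e3 θ).re = 0 := by
  simp [e3, qI_re, qI_imI, qI_imJ, qI_imK, qJ_re, qJ_imI, qJ_imJ, qJ_imK,
    eI_re, eI_imI, eI_imJ, eI_imK]
lemma e3_imI (θ : ℝ) : (e3 θ).imI = 0 := by
  simp [e3, qI_re, qI_imI, qI_imJ, qI_imK, qJ_re, qJ_imI, qJ_imJ, qJ_imK,
    eI_re, eI_imI, eI_imJ, eI_imK]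
lemma e3_imJ (θ : ℝ) : (e3 θ).imJ = Real.cos θ := by
  simp [e3, qI_re, qI_imI, qI_imJ, qI_imK, qJ_re, qJ_imI, qJ_imJ, qJ_imK,
    eI_re, eI_imI, eI_imJ, eI_imK]
lemma e3_imK (θ : ℝ) : (e3 θ).imK = Real.sin θ := by
  simp [e3, qI_re, qI_imI, qI_imJ, qI_imK, qJ_re, qJ_imI, qJ_imJ, qJ_imK,
    eI_re, eI_imI, eI_imJ, eI_imK]

lemma decomp (θ : ℝ) (v : H4) :
    v = v.re • (1 : H4) + v.imI • qI + x2θ θ v • e2 θ + x3θ θ v • e3 θ := by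
  have h := Real.sin_sq_add_cos_sq θ
  ext <;> simp [x2θ, x3θ, e2_re, e2_imI, e2_imJ, e2_imK, e3_re, e3_imI, e3_imJ, e3_imK,
    qI_re, qI_imI, qI_imJ, qI_imK, one_re', one_imI', one_imJ', one_imK']
  · linear_combination (-v.imJ) * h
  · linear_combination (-v.imK) * h

lemma qI_sq : qI * qI = -1 := by
  ext <;> simp [qI_re, qI_imI, qI_imJ, qI_imK, one_re', one_imI', one_imJ', one_imK']

lemma e2_qI (θ : ℝ) : e2 θ * qI = e3 θ := by
  ext <;> simp [qI_re, qI_imI, qI_imJ, qI_imK,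
    e2_re, e2_imI, e2_imJ, e2_imK, e3_re, e3_imI, e3_imJ, e3_imK]

lemma e3_qI (θ : ℝ) : e3 θ * qI = - e2 θ := by
  rw [← e2_qI, mul_assoc, qI_sq]; simp

lemma memAc_iff (θ : ℝ) (α β : ℂ) (Ω : Set H4) (f : H4 → ℂ) :
    memAc θ α β Ω f ↔ WHol (psi θ α β) Ω f ∧
      IntegrableOn (fun z => ‖f z‖ ^ 2) Ω volume := by
  have hI := Complex.I_sq
  unfold memAc WHol
  rw [and_assoc]
  refine and_congr_right (fun _ => and_congr_left (fun _ => forall₂_congr (fun z _ => ?_)))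
  unfold db1 db2
  constructor
  · rintro ⟨h1, h2⟩ v
    have hv := decomp θ v
    have hv2 : v * qI = v.re • qI - v.imI • (1 : H4) + x2θ θ v • e3 θ - x3θ θ v • e2 θ := by
      conv_lhs => rw [hv]
      simp only [add_mul, smul_mul_assoc, one_mul, qI_sq, e2_qI, e3_qI]
      simp only [smul_neg]; abel
    rw [hv2]
    have hv3 : fderiv ℝ f z v = v.re * fderiv ℝ f z 1 + v.imI * fderiv ℝ f z qI
        + x2θ θ v * fderiv ℝ f z (e2 θ) + x3θ θ v * fderiv ℝ f z (e3 θ) := by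
      conv_lhs => rw [hv]
      simp only [map_add, map_smul, Complex.real_smul]
    rw [hv3, psi_apply]
    simp only [map_add, map_sub, map_smul, Complex.real_smul]
    linear_combination (-Complex.I * v.re - v.imI) * h1 + (-Complex.I * x2θ θ v - x3θ θ v) * h2
      + (v.re * fderiv ℝ f z qI + x2θ θ v * fderiv ℝ f z (e3 θ) 
        + f z * (α * v.imI + β * x3θ θ v)) * hI
  · intro h
    have h1 := h 1
    have h2 := h (e2 θ)
    have x1 : x2θ θ 1 = 0 := by simp [x2θ, one_imJ', one_imK']
    have x2 : x3θ θ 1 = 0 := by simp [x3θ, one_imJ', one_imK']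
    have x3 : x2θ θ (e2 θ) = 1 := by
      have := Real.sin_sq_add_cos_sq θ
      simp [x2θ, e2_re, e2_imI, e2_imJ, e2_imK]; linarith
    have x4 : x3θ θ (e2 θ) = 0 := by simp [x3θ, e2_re, e2_imI, e2_imJ, e2_imK]; ring
    have x5 : (e2 θ).re = 0 := by simp [e2_re, e2_imI, e2_imJ, e2_imK]
    have x6 : (e2 θ).imI = 0 := by simp [e2_re, e2_imI, e2_imJ, e2_imK]
    rw [one_mul, psi_apply, x1, x2, one_re', one_imI'] at h1
    rw [e2_qI, psi_apply, x3, x4, x5, x6] at h2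
    push_cast at h1 h2
    constructor
    · rw [h1]
      linear_combination (fderiv ℝ f z 1 + f z * α) * hI
    · rw [h2]
      linear_combination (fderiv ℝ f z (e2 θ) + f z * β) * hI

lemma WHol.memLp {ψ : H4 →L[ℝ] ℂ} {Ω : Set H4} (hΩ : IsOpen Ω) {f : H4 → ℂ} (hf : WHol ψ Ω f)
    (hi : IntegrableOn (fun z => ‖f z‖ ^ 2) Ω volume) : MemLp f 2 (volume.restrict Ω) :=
  (memLp_two_iff_integrable_sq_norm
    (hf.1.continuousOn.aestronglyMeasurable hΩ.measurableSet)).2 hi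

lemma WHol.diffAt {ψ : H4 →L[ℝ] ℂ} {Ω : Set H4} (hΩ : IsOpen Ω) {f : H4 → ℂ} (hf : WHol ψ Ω f)
    {z : H4} (hz : z ∈ Ω) : DifferentiableAt ℝ f z :=
  (hf.1.contDiffAt (hΩ.mem_nhds hz)).differentiableAt (by simp)

lemma WHol.add {ψ : H4 →L[ℝ] ℂ} {Ω : Set H4} (hΩ : IsOpen Ω) {f g : H4 → ℂ} (hf : WHol ψ Ω f)
    (hg : WHol ψ Ω g) : WHol ψ Ω (f + g) := by
  refine ⟨hf.1.add hg.1, fun z hz v => ?_⟩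
  rw [fderiv_add (hf.diffAt hΩ hz) (hg.diffAt hΩ hz), add_apply, add_apply, hf.2 z hz,
    hg.2 z hz, Pi.add_apply]
  ring

lemma WHol.smul {ψ : H4 →L[ℝ] ℂ} {Ω : Set H4} (hΩ : IsOpen Ω) {f : H4 → ℂ} (hf : WHol ψ Ω f)
    (c : ℂ) : WHol ψ Ω (c • f) := by
  refine ⟨hf.1.const_smul c, fun z hz v => ?_⟩
  rw [fderiv_const_smul (hf.diffAt hΩ hz), smul_apply, smul_apply, hf.2 z hz, Pi.smul_apply]
  simp only [smul_eq_mul]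
  ring

lemma WHol.sub {ψ : H4 →L[ℝ] ℂ} {Ω : Set H4} (hΩ : IsOpen Ω) {f g : H4 → ℂ} (hf : WHol ψ Ω f)
    (hg : WHol ψ Ω g) : WHol ψ Ω (f - g) := by
  have := hf.add hΩ (hg.smul hΩ (-1))
  rwa [neg_one_smul, ← sub_eq_add_neg] at this

open scoped ENNReal in
lemma point_bound {ψ : H4 →L[ℝ] ℂ} (hψ : ∀ v, ψ (v * qI) = -Complex.I * ψ v)
    {Ω : Set H4} (hΩ : IsOpen Ω) {r : ℝ} (hr : 0 < r) : ∃ C : ℝ, 0 ≤ C ∧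
    ∀ (f : H4 → ℂ) (u : Lp ℂ 2 (volume.restrict Ω)), WHol ψ Ω f → u =ᵐ[volume.restrict Ω] f →
      ∀ z, Metric.closedBall z r ⊆ Ω → ‖f z‖ ≤ C * ‖u‖ := by
  set V := (volume (Metric.ball (0 : H4) r)).toReal with hV
  have hVpos : 0 < V := ENNReal.toReal_pos (Metric.measure_ball_pos volume _ hr).ne'
    measure_ball_lt_top.ne
  set K := Real.exp (‖ψ‖ * r) with hK
  refine ⟨K / Real.sqrt V, by positivity, fun f u hf hu z hb => ?_⟩
  have h1 := l2_bound hψ hΩ hf hb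
  have h2 : ∫⁻ x in Ω, ‖f x‖ₑ ^ 2 = eLpNorm u 2 (volume.restrict Ω) ^ 2 := by
    have := eLpNorm_nnreal_pow_eq_lintegral (f := u) (μ := volume.restrict Ω) (p := 2) (by simp)
    simp only [ENNReal.coe_ofNat, NNReal.coe_ofNat, ENNReal.rpow_ofNat] at this
    rw [this]
    refine lintegral_congr_ae ?_
    filter_upwards [hu] with x hx
    rw [hx]
  rw [h2] at h1
  have hfin : eLpNorm u 2 (volume.restrict Ω) ≠ ∞ := Lp.eLpNorm_ne_top u
  have h3 := ENNReal.toReal_mono (by finiteness) h1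
  simp only [ENNReal.toReal_mul, ENNReal.toReal_pow, toReal_enorm] at h3
  rw [ENNReal.toReal_ofReal (Real.exp_pos _).le, ← Lp.norm_def, ← hV, ← hK] at h3
  have hs : 0 < Real.sqrt V := Real.sqrt_pos.2 hVpos
  have h4 : (Real.sqrt V * ‖f z‖) ^ 2 ≤ (K * ‖u‖) ^ 2 := by
    rw [mul_pow, mul_pow, Real.sq_sqrt hVpos.le]; exact h3
  have h5 := (sq_le_sq₀ (by positivity) (by positivity)).1 h4
  rw [div_mul_eq_mul_div, le_div_iff₀ hs]
  linarith

lemma local_bound {ψ : H4 →L[ℝ] ℂ} (hψ : ∀ v, ψ (v * qI) = -Complex.I * ψ v)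
    {Ω : Set H4} (hΩ : IsOpen Ω) {z₀ : H4} (hz : z₀ ∈ Ω) : ∃ r : ℝ, 0 < r ∧ ∃ C : ℝ, 0 ≤ C ∧
    Metric.ball z₀ r ⊆ Ω ∧
    ∀ (f : H4 → ℂ) (u : Lp ℂ 2 (volume.restrict Ω)), WHol ψ Ω f → u =ᵐ[volume.restrict Ω] f →
      ∀ z ∈ Metric.ball z₀ r, ‖f z‖ ≤ C * ‖u‖ ∧ ‖fderiv ℝ f z‖ ≤ C * ‖u‖ := by
  obtain ⟨ε, hε, hεΩ⟩ := Metric.isOpen_iff.1 hΩ z₀ hz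
  set r := ε / 4 with hr
  have hr0 : 0 < r := by positivity
  obtain ⟨C, hC, hCb⟩ := point_bound hψ hΩ hr0
  have hsub : ∀ z, dist z z₀ < 2 * r + r / 2 → Metric.closedBall z r ⊆ Ω := by
    intro z hz x hx
    apply hεΩ
    have := Metric.mem_closedBall.1 hx
    have := dist_triangle x z z₀
    rw [Metric.mem_ball]; linarith
  set C' := (Real.exp (‖ψ‖ * r) / r + ‖ψ‖) * C with hC'
  refine ⟨r, hr0, max C C', le_max_of_le_left hC, fun x hx => hεΩ ?_, fun f u hf hu z hz => ?_⟩
  · rw [Metric.mem_ball] at *; linarith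
  have hz' := Metric.mem_ball.1 hz
  constructor
  · refine (hCb f u hf hu z (hsub z (by linarith))).trans ?_
    gcongr
    exact le_max_left _ _
  · have := fderiv_bound hψ hΩ hf hr0 (hsub z (by linarith)) (M := C * ‖u‖) (by
      intro x hx
      refine hCb f u hf hu x (hsub x ?_)
      have := Metric.mem_closedBall.1 hx
      have := dist_triangle x z z₀
      linarith)
    refine this.trans ?_
    rw [← mul_assoc, ← hC']
    gcongr
    exact le_max_right _ _

/-- The Bergman space as a subspace of `L²`. -/
def bergS (ψ : H4 →L[ℝ] ℂ) {Ω : Set H4} (hΩ : IsOpen Ω) :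
    Submodule ℂ (Lp ℂ 2 (volume.restrict Ω)) where
  carrier := {u | ∃ f, WHol ψ Ω f ∧ u =ᵐ[volume.restrict Ω] f}
  zero_mem' := ⟨0, ⟨contDiffOn_const, fun z _ v => by simp⟩, Lp.coeFn_zero _ _ _⟩
  add_mem' := by
    rintro u v ⟨f, hf, hu⟩ ⟨g, hg, hv⟩
    exact ⟨f + g, hf.add hΩ hg, (Lp.coeFn_add u v).trans (hu.add hv)⟩
  smul_mem' := by
    rintro c u ⟨f, hf, hu⟩
    exact ⟨c • f, hf.smul hΩ c, (Lp.coeFn_smul c u).trans (hu.const_smul c)⟩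

lemma mem_bergS {ψ : H4 →L[ℝ] ℂ} {Ω : Set H4} {hΩ : IsOpen Ω}
    {u : Lp ℂ 2 (volume.restrict Ω)} :
    u ∈ bergS ψ hΩ ↔ ∃ f, WHol ψ Ω f ∧ u =ᵐ[volume.restrict Ω] f := Iff.rfl

open Filter Topology in
lemma bergS_closed {ψ : H4 →L[ℝ] ℂ} (hψ : ∀ v, ψ (v * qI) = -Complex.I * ψ v)
    {Ω : Set H4} (hΩ : IsOpen Ω) : IsClosed (bergS ψ hΩ : Set (Lp ℂ 2 (volume.restrict Ω))) := by
  apply IsSeqClosed.isClosed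
  intro u u₀ hu hlim
  choose f hf huf using hu
  have hcau : CauchySeq u := hlim.cauchySeq
  have hdiff : ∀ n m, ((u n - u m : Lp ℂ 2 (volume.restrict Ω)) : H4 → ℂ)
      =ᵐ[volume.restrict Ω] (f n - f m) :=
    fun n m => (Lp.coeFn_sub _ _).trans ((huf n).sub (huf m))
  have hloc : ∀ z₀ ∈ Ω, ∃ r : ℝ, 0 < r ∧ Metric.ball z₀ r ⊆ Ω ∧
      UniformCauchySeqOn f atTop (Metric.ball z₀ r) ∧
      UniformCauchySeqOn (fun n => fderiv ℝ (f n)) atTop (Metric.ball z₀ r) := by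
    intro z₀ hz₀
    obtain ⟨r, hr, C, hC, hsub, hb⟩ := local_bound hψ hΩ hz₀
    have hN : ∀ ε > 0, ∃ N, ∀ m ≥ N, ∀ n ≥ N, C * ‖u m - u n‖ < ε := by
      intro ε hε
      obtain ⟨N, hN⟩ := Metric.cauchySeq_iff.1 hcau (ε / (C + 1)) (by positivity)
      refine ⟨N, fun m hm n hn => ?_⟩
      have h1 := hN m hm n hn
      rw [dist_eq_norm, lt_div_iff₀ (by positivity)] at h1
      nlinarith [norm_nonneg (u m - u n)]
    refine ⟨r, hr, hsub, ?_, ?_⟩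
    · rw [Metric.uniformCauchySeqOn_iff]
      intro ε hε
      obtain ⟨N, hN⟩ := hN ε hε
      refine ⟨N, fun m hm n hn x hx => lt_of_le_of_lt ?_ (hN m hm n hn)⟩
      have := (hb _ _ ((hf m).sub hΩ (hf n)) (hdiff m n) x hx).1
      rwa [dist_eq_norm]
    · refine (Metric.uniformCauchySeqOn_iff (β := ℕ) (α := H4 →L[ℝ] ℂ)).2 ?_
      intro ε hε
      obtain ⟨N, hN⟩ := hN ε hε
      refine ⟨N, fun m hm n hn x hx => lt_of_le_of_lt ?_ (hN m hm n hn)⟩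
      have := (hb _ _ ((hf m).sub hΩ (hf n)) (hdiff m n) x hx).2
      rw [fderiv_sub ((hf m).diffAt hΩ (hsub hx)) ((hf n).diffAt hΩ (hsub hx))] at this
      exact (dist_eq_norm (fderiv ℝ (f m) x) (fderiv ℝ (f n) x)).trans_le this
  have hg : ∀ z ∈ Ω, ∃ a, Tendsto (fun n => f n z) atTop (𝓝 a) := by
    intro z hz
    obtain ⟨r, hr, -, h1, -⟩ := hloc z hz
    exact cauchySeq_tendsto_of_complete (h1.cauchySeq (Metric.mem_ball_self hr))
  have hg' : ∀ z ∈ Ω, ∃ a, Tendsto (fun n => fderiv ℝ (f n) z) atTop (𝓝 a) := by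
    intro z hz
    obtain ⟨r, hr, -, -, h1⟩ := hloc z hz
    exact cauchySeq_tendsto_of_complete (h1.cauchySeq (Metric.mem_ball_self hr))
  choose! g hg using hg
  choose! g' hg' using hg'
  have hunif : ∀ z₀ ∈ Ω, ∃ r : ℝ, 0 < r ∧ Metric.ball z₀ r ⊆ Ω ∧
      TendstoUniformlyOn (fun n => fderiv ℝ (f n)) g' atTop (Metric.ball z₀ r) := by
    intro z₀ hz₀
    obtain ⟨r, hr, hsub, -, h1⟩ := hloc z₀ hz₀
    exact ⟨r, hr, hsub, h1.tendstoUniformlyOn_of_tendsto (fun x hx => hg' x (hsub hx))⟩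
  have hder : ∀ z ∈ Ω, HasFDerivAt g (g' z) z := by
    intro z hz
    obtain ⟨r, hr, hsub, h1⟩ := hunif z hz
    exact hasFDerivAt_of_tendstoUniformlyOn Metric.isOpen_ball h1
      (fun n x hx => ((hf n).diffAt hΩ (hsub hx)).hasFDerivAt)
      (fun x hx => hg x (hsub hx)) (Metric.mem_ball_self hr)
  have hcont : ContinuousOn g' Ω := by
    intro z hz
    obtain ⟨r, hr, hsub, h1⟩ := hunif z hz
    have h2 : ContinuousOn g' (Metric.ball z r) := h1.continuousOn
      (Frequently.of_forall fun n =>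
        ((hf n).1.continuousOn_fderiv_of_isOpen hΩ (by simp)).mono hsub)
    exact (h2.continuousAt (Metric.isOpen_ball.mem_nhds
      (Metric.mem_ball_self hr))).continuousWithinAt
  refine ⟨g, ⟨?_, ?_⟩, ?_⟩
  · rw [show (1 : WithTop ℕ∞) = 0 + 1 from (zero_add 1).symm,
      contDiffOn_succ_iff_fderiv_of_isOpen hΩ, contDiffOn_zero]
    exact ⟨fun z hz => (hder z hz).differentiableAt.differentiableWithinAt,
      by simp, hcont.congr (fun z hz => (hder z hz).fderiv)⟩
  · intro z hz v
    rw [(hder z hz).fderiv]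
    have hap : ∀ v, Tendsto (fun n => fderiv ℝ (f n) z v) atTop (𝓝 (g' z v)) := fun v =>
      ((ContinuousLinearMap.apply ℝ ℂ v).continuous.tendsto _).comp (hg' z hz)
    refine tendsto_nhds_unique (hap (v * qI)) ?_
    have h2 := ((hap v).const_mul Complex.I).add
      (((hg z hz).const_mul (2 * Complex.I)).mul_const (ψ v))
    refine h2.congr (fun n => ((hf n).2 z hz v).symm)
  · obtain ⟨ns, hns, hae⟩ := (tendstoInMeasure_of_tendsto_Lp hlim).exists_seq_tendsto_ae
    have hall : ∀ᵐ x ∂(volume.restrict Ω), ∀ n, u n x = f n x := ae_all_iff.2 huf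
    filter_upwards [hae, hall, ae_restrict_mem hΩ.measurableSet] with x h1 h2 h3
    refine tendsto_nhds_unique h1 ?_
    simp only [h2]
    exact (hg x h3).comp hns.tendsto_atTop

lemma eval_unique {ψ : H4 →L[ℝ] ℂ} (hψ : ∀ v, ψ (v * qI) = -Complex.I * ψ v)
    {Ω : Set H4} (hΩ : IsOpen Ω) {f g : H4 → ℂ} (hf : WHol ψ Ω f) (hg : WHol ψ Ω g)
    (h : f =ᵐ[volume.restrict Ω] g) {z : H4} (hz : z ∈ Ω) : f z = g z := by
  obtain ⟨r, hr, C, hC, hsub, hb⟩ := local_bound hψ hΩ hz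
  have h0 : ((0 : Lp ℂ 2 (volume.restrict Ω)) : H4 → ℂ) =ᵐ[volume.restrict Ω] f - g := by
    filter_upwards [Lp.coeFn_zero ℂ 2 (volume.restrict Ω), h] with x h1 h2
    rw [h1, Pi.sub_apply, h2, sub_self, Pi.zero_apply]
  have := (hb _ 0 (hf.sub hΩ hg) h0 z (Metric.mem_ball_self hr)).1
  rw [norm_zero, mul_zero, norm_le_zero_iff] at this
  exact sub_eq_zero.1 this

lemma riesz {ψ : H4 →L[ℝ] ℂ} (hψ : ∀ v, ψ (v * qI) = -Complex.I * ψ v)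
    {Ω : Set H4} (hΩ : IsOpen Ω) {z : H4} (hz : z ∈ Ω) :
    ∃ k : H4 → ℂ, WHol ψ Ω k ∧ IntegrableOn (fun z => ‖k z‖ ^ 2) Ω volume ∧
      ∀ f : H4 → ℂ, WHol ψ Ω f → IntegrableOn (fun z => ‖f z‖ ^ 2) Ω volume →
        f z = ∫ w in Ω, (starRingEnd ℂ) (k w) * f w := by
  have hcl := bergS_closed hψ hΩ
  have : CompleteSpace (bergS ψ hΩ) := hcl.completeSpace_coe
  obtain ⟨r, hr, C, hC, hsub, hb⟩ := local_bound hψ hΩ hz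
  have hrep : ∀ u : bergS ψ hΩ, ∃ f, WHol ψ Ω f ∧
    ((u : Lp ℂ 2 (volume.restrict Ω)) : H4 → ℂ) =ᵐ[volume.restrict Ω] f := fun u => u.2
  choose R hR hRu using hrep
  let ev : bergS ψ hΩ →ₗ[ℂ] ℂ :=
    { toFun := fun u => R u z
      map_add' := fun u v => by
        refine eval_unique hψ hΩ (hR _) ((hR u).add hΩ (hR v)) ?_ hz
        exact (hRu (u + v)).symm.trans
          ((Lp.coeFn_add (u : Lp ℂ 2 (volume.restrict Ω)) v).trans ((hRu u).add (hRu v)))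
      map_smul' := fun c u => by
        refine eval_unique hψ hΩ (hR _) ((hR u).smul hΩ c) ?_ hz
        exact (hRu (c • u)).symm.trans
          ((Lp.coeFn_smul c (u : Lp ℂ 2 (volume.restrict Ω))).trans ((hRu u).const_smul c)) }
  let evc : StrongDual ℂ (bergS ψ hΩ) := ev.mkContinuous C
    (fun u => (hb _ _ (hR u) (hRu u) z (Metric.mem_ball_self hr)).1)
  let k := (InnerProductSpace.toDual ℂ (bergS ψ hΩ)).symm evc
  refine ⟨R k, hR k, ?_, ?_⟩
  · have h1 : MemLp (R k) 2 (volume.restrict Ω) :=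
      (memLp_congr_ae (hRu k)).1 (Lp.memLp (k : Lp ℂ 2 (volume.restrict Ω)))
    exact (memLp_two_iff_integrable_sq_norm h1.1).1 h1
  · intro f hf hfi
    have hm := hf.memLp hΩ hfi
    let u : bergS ψ hΩ := ⟨hm.toLp f, f, hf, hm.coeFn_toLp⟩
    have h1 : inner ℂ k u = evc u := InnerProductSpace.toDual_symm_apply
    have h2 : evc u = f z := eval_unique hψ hΩ (hR u) hf
      ((hRu u).symm.trans hm.coeFn_toLp) hz
    rw [← h2, ← h1, Submodule.coe_inner, L2.inner_def]
    refine integral_congr_ae ?_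
    have h3 : ((u : Lp ℂ 2 (volume.restrict Ω)) : H4 → ℂ) =ᵐ[volume.restrict Ω] f :=
      hm.coeFn_toLp
    filter_upwards [hRu k, h3] with x h4 h5
    rw [h4, h5, RCLike.inner_apply, mul_comm]

/-- existence of a reproducing kernel for the (α,β)-holomorphic Bergman space. -/
theorem statement16 (Ω : Set H4) (hΩo : IsOpen Ω) (hΩc : IsConnected Ω)
    (hΩb : Bornology.IsBounded Ω) (θ : ℝ) (hθ : θ ∈ Set.Ico 0 (2 * Real.pi)) (α β : ℂ) :
    ∃ B : H4 → H4 → ℂ,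
      (∀ z ∈ Ω, memAc θ α β Ω (fun w => (starRingEnd ℂ) (B z w))) ∧
      (∀ f : H4 → ℂ, memAc θ α β Ω f → ∀ z ∈ Ω, f z = ∫ w in Ω, B z w * f w) := by
  classical
  have hk : ∀ z ∈ Ω, ∃ k : H4 → ℂ, WHol (psi θ α β) Ω k ∧
      IntegrableOn (fun z => ‖k z‖ ^ 2) Ω volume ∧
      ∀ f : H4 → ℂ, WHol (psi θ α β) Ω f → IntegrableOn (fun z => ‖f z‖ ^ 2) Ω volume →
        f z = ∫ w in Ω, (starRingEnd ℂ) (k w) * f w :=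
    fun z hz => riesz (psi_qI θ α β) hΩo hz
  choose! k h1 h2 h3 using hk
  refine ⟨fun z w => (starRingEnd ℂ) (k z w), fun z hz => ?_, fun f hf z hz => ?_⟩
  · simp only [Complex.conj_conj]
    exact (memAc_iff θ α β Ω _).2 ⟨h1 z hz, h2 z hz⟩
  · obtain ⟨hf1, hf2⟩ := (memAc_iff θ α β Ω f).1 hf
    exact h3 z hz f hf1 hf2

end
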